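/- Let n ≥ 3 and consider the two-dimensional semi-staggered Stokes discretization with B = [B_x; B_y], B_x = (1/(4h))·(G ⊗ H), B_y = (1/(4h))·(H ⊗ G), h = 1/n, A = I_2 ⊗ Δ, Δ = B_x B_xᵀ + B_y B_yᵀ. Then 1 is an eigenvalue of the Schur complement S = Bᵀ A⁻¹ B with multiplicity exactly (n−2)², i.e., dim ker(S − I) = (n−2)². -/

import Mathlib

open Matrix
open scoped Kronecker

def Emat (n : ℕ) : Matrix (Fin (n - 1)) (Fin n) ℝ :=
  Matrix.of fun i j => if (j : ℕ) = (i : ℕ) + 1 then 1 else 0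

def Zmat (n : ℕ) : Matrix (Fin (n - 1)) (Fin n) ℝ :=
  Matrix.of fun i j => if (j : ℕ) = (i : ℕ) then 1 else 0

def Gmat (n : ℕ) : Matrix (Fin (n - 1)) (Fin n) ℝ := Emat n - Zmat n

def Hmat (n : ℕ) : Matrix (Fin (n - 1)) (Fin n) ℝ := Emat n + Zmat n

lemma E_row (n : ℕ) (i : Fin (n - 1)) (f : Fin n → ℝ) :
    ∑ j, Emat n i j * f j = f ⟨i + 1, by omega⟩ := by
  rw [Finset.sum_eq_single ⟨i + 1, by omega⟩]
  · simp [Emat]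
  · intro b _ hb
    have : ¬ ((b : ℕ) = i + 1) := fun h => hb (Fin.ext h)
    simp [Emat, this]
  · simp

lemma Z_row (n : ℕ) (i : Fin (n - 1)) (f : Fin n → ℝ) :
    ∑ j, Zmat n i j * f j = f ⟨i, by omega⟩ := by
  rw [Finset.sum_eq_single ⟨i, by omega⟩]
  · simp [Zmat]
  · intro b _ hb
    have : ¬ ((b : ℕ) = i) := fun h => hb (Fin.ext h)
    simp [Zmat, this]
  · simp

lemma E_col (n : ℕ) (j : Fin n) (f : Fin (n - 1) → ℝ) :
    ∑ i, Emat n i j * f i = if h : 0 < (j : ℕ) then f ⟨j - 1, by omega⟩ else 0 := by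
  split_ifs with h
  · rw [Finset.sum_eq_single ⟨j - 1, by omega⟩]
    · have : (j : ℕ) = j - 1 + 1 := by omega
      simp [Emat, ← this]
    · intro b _ hb
      have : ¬ ((j : ℕ) = b + 1) := fun h => hb (Fin.ext (by simp; omega))
      simp [Emat, this]
    · simp
  · apply Finset.sum_eq_zero
    intro b _
    have : ¬ ((j : ℕ) = b + 1) := by omega
    simp [Emat, this]

lemma Z_col (n : ℕ) (j : Fin n) (f : Fin (n - 1) → ℝ) :
    ∑ i, Zmat n i j * f i = if h : (j : ℕ) < n - 1 then f ⟨j, h⟩ else 0 := by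
  split_ifs with h
  · rw [Finset.sum_eq_single ⟨j, h⟩]
    · simp [Zmat]
    · intro b _ hb
      have : ¬ ((j : ℕ) = b) := fun h => hb (Fin.ext h.symm)
      simp [Zmat, this]
    · simp
  · apply Finset.sum_eq_zero
    intro b _
    have : ¬ ((j : ℕ) = b) := by omega
    simp [Zmat, this]

lemma EE (n : ℕ) : Emat n * (Emat n)ᵀ = 1 := by
  ext i k
  rw [Matrix.mul_apply, E_row n i (fun j => (Emat n)ᵀ j k)]
  simp [Emat, Matrix.one_apply, Fin.ext_iff]

lemma ZZ (n : ℕ) : Zmat n * (Zmat n)ᵀ = 1 := by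
  ext i k
  rw [Matrix.mul_apply, Z_row n i (fun j => (Zmat n)ᵀ j k)]
  simp [Zmat, Matrix.one_apply, Fin.ext_iff]

lemma EZ_comm (n : ℕ) : Emat (n - 1) * Zmat n = Zmat (n - 1) * Emat n := by
  ext i k
  rw [Matrix.mul_apply, E_row (n - 1) i (fun j => (Zmat n) j k), Matrix.mul_apply,
    Z_row (n - 1) i (fun j => (Emat n) j k)]
  simp [Emat, Zmat]

lemma GH_comm (n : ℕ) : Gmat (n - 1) * Hmat n = Hmat (n - 1) * Gmat n := by
  simp only [Gmat, Hmat, Matrix.sub_mul, Matrix.mul_add, Matrix.add_mul, Matrix.mul_sub, EZ_comm]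
  abel

lemma GH_skew (n : ℕ) : Gmat n * (Hmat n)ᵀ = - (Hmat n * (Gmat n)ᵀ) := by
  simp only [Gmat, Hmat, Matrix.sub_mul, Matrix.mul_add, Matrix.add_mul, Matrix.mul_sub,
    Matrix.transpose_add, Matrix.transpose_sub, EE, ZZ]
  abel

lemma G_rinv (n : ℕ) : ∃ R : Matrix (Fin n) (Fin (n - 1)) ℝ, Gmat n * R = 1 := by
  refine ⟨Matrix.of fun j i => if (i : ℕ) < j then 1 else 0, ?_⟩
  ext i k
  rw [Gmat, Matrix.sub_mul, Matrix.sub_apply, Matrix.mul_apply, Matrix.mul_apply,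
    E_row n i (fun j => _), Z_row n i (fun j => _)]
  simp only [Matrix.of_apply, Matrix.one_apply, Fin.ext_iff]
  split_ifs <;> first | omega | simp

lemma H_rinv (n : ℕ) : ∃ R : Matrix (Fin n) (Fin (n - 1)) ℝ, Hmat n * R = 1 := by
  refine ⟨Matrix.of fun j i => if (i : ℕ) < j then (-1) ^ ((j : ℕ) - 1 - i) else 0, ?_⟩
  ext i k
  rw [Hmat, Matrix.add_mul, Matrix.add_apply, Matrix.mul_apply, Matrix.mul_apply,
    E_row n i (fun j => _), Z_row n i (fun j => _)]
  simp only [Matrix.of_apply, Matrix.one_apply, Fin.ext_iff]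
  split_ifs with h1 h2 h3 h3 <;> try omega
  · have : (i : ℕ) + 1 - 1 - k = (i - 1 - k) + 1 := by omega
    rw [this, pow_succ]; ring
  · have : (i : ℕ) + 1 - 1 - k = 0 := by omega
    rw [this]; simp
  · simp

lemma divis {κ : Type*} (n : ℕ) (X Y : Matrix (Fin (n - 1)) κ ℝ)
    (h : (Hmat n)ᵀ * X = (Gmat n)ᵀ * Y) :
    ∃ W : Matrix (Fin (n - 1 - 1)) κ ℝ,
      Y = (Hmat (n - 1))ᵀ * W ∧ X = (Gmat (n - 1))ᵀ * W := by
  have key : ∀ (j : Fin n) (k : κ),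
      (if h : 0 < (j : ℕ) then X ⟨j - 1, by omega⟩ k else 0)
        + (if h : (j : ℕ) < n - 1 then X ⟨j, h⟩ k else 0)
      = (if h : 0 < (j : ℕ) then Y ⟨j - 1, by omega⟩ k else 0)
        - (if h : (j : ℕ) < n - 1 then Y ⟨j, h⟩ k else 0) := by
    intro j k
    have := congrFun (congrFun h j) k
    simp only [Hmat, Gmat, Matrix.transpose_add, Matrix.transpose_sub,
      Matrix.add_apply, Matrix.sub_apply, Matrix.mul_apply,
      Matrix.transpose_apply, add_mul, sub_mul, Finset.sum_add_distrib,
      Finset.sum_sub_distrib] at this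
    rwa [E_col n j (fun i => X i k), Z_col n j (fun i => X i k), E_col n j (fun i => Y i k),
      Z_col n j (fun i => Y i k)] at this
  refine ⟨Matrix.of fun i k => (Y ⟨i, by omega⟩ k - X ⟨i, by omega⟩ k) / 2, ?_, ?_⟩
  all_goals
    ext j k
    have k1 := key ⟨j, by omega⟩ k
    have k2 := key ⟨j + 1, by omega⟩ k
    simp only [Hmat, Gmat, Matrix.transpose_add, Matrix.transpose_sub,
      Matrix.add_apply, Matrix.sub_apply, Matrix.mul_apply,
      Matrix.transpose_apply, add_mul, sub_mul, Finset.sum_add_distrib,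
      Finset.sum_sub_distrib]
    rw [E_col (n - 1) j (fun i => _), Z_col (n - 1) j (fun i => _)]
    have hj := j.2
    simp only [Matrix.of_apply, hj, dite_true, Nat.succ_pos, Nat.add_sub_cancel, Fin.eta] at k1 k2 ⊢
    split_ifs at k1 k2 ⊢ <;> first | omega | linarith

lemma curl_free (n : ℕ) (U V : Matrix (Fin (n - 1)) (Fin (n - 1)) ℝ)
    (h : (Gmat n)ᵀ * U * Hmat n = (Hmat n)ᵀ * V * Gmat n) :
    ∃ W : Matrix (Fin (n - 1 - 1)) (Fin (n - 1 - 1)) ℝ,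
      U = (Hmat (n - 1))ᵀ * W * Gmat (n - 1) ∧ V = (Gmat (n - 1))ᵀ * W * Hmat (n - 1) := by
  obtain ⟨RG, hRG⟩ := G_rinv n
  obtain ⟨RH, hRH⟩ := H_rinv n
  obtain ⟨SG, hSG⟩ := G_rinv (n - 1)
  obtain ⟨SH, hSH⟩ := H_rinv (n - 1)
  obtain ⟨W, hU, hV⟩ := divis n (V * Gmat n) (U * Hmat n) (by
    rw [← Matrix.mul_assoc, ← Matrix.mul_assoc, h])
  have hSG' : SGᵀ * (Gmat (n - 1))ᵀ = 1 := by rw [← Matrix.transpose_mul, hSG, transpose_one]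
  have hSH' : SHᵀ * (Hmat (n - 1))ᵀ = 1 := by rw [← Matrix.transpose_mul, hSH, transpose_one]
  have h1 : W = SHᵀ * U * Hmat n := by
    rw [Matrix.mul_assoc, hU, ← Matrix.mul_assoc, hSH', Matrix.one_mul]
  have h2 : W = SGᵀ * V * Gmat n := by
    rw [Matrix.mul_assoc, hV, ← Matrix.mul_assoc, hSG', Matrix.one_mul]
  obtain ⟨W', hV', hU'⟩ := divis n (SHᵀ * U)ᵀ (SGᵀ * V)ᵀ (by
    rw [← Matrix.transpose_mul, ← Matrix.transpose_mul, ← h1, ← h2])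
  have hV'' : SGᵀ * V = W'ᵀ * Hmat (n - 1) := by
    rw [← Matrix.transpose_transpose (SGᵀ * V), hV', Matrix.transpose_mul, transpose_transpose]
  have hU'' : SHᵀ * U = W'ᵀ * Gmat (n - 1) := by
    rw [← Matrix.transpose_transpose (SHᵀ * U), hU', Matrix.transpose_mul, transpose_transpose]
  refine ⟨W'ᵀ, ?_, ?_⟩
  · calc U = U * Hmat n * RH := by rw [Matrix.mul_assoc, hRH, Matrix.mul_one]
      _ = (Hmat (n - 1))ᵀ * (W'ᵀ * Gmat (n - 1) * Hmat n) * RH := by rw [hU, h1, hU'']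
      _ = _ := by simp only [Matrix.mul_assoc, hRH, Matrix.mul_one]
  · calc V = V * Gmat n * RG := by rw [Matrix.mul_assoc, hRG, Matrix.mul_one]
      _ = (Gmat (n - 1))ᵀ * (W'ᵀ * Hmat (n - 1) * Gmat n) * RG := by rw [hV, h2, hV'']
      _ = _ := by simp only [Matrix.mul_assoc, hRG, Matrix.mul_one]

section abstract_part

variable {I J : Type*} [Fintype I] [Fintype J] [DecidableEq I] [DecidableEq J]

lemma delta_inj (Bx By : Matrix I J ℝ) (R : Matrix J I ℝ) (hR : Bx * R = 1) (z : I → ℝ)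
    (hz : (Bx * Bxᵀ + By * Byᵀ) *ᵥ z = 0) : z = 0 := by
  have h1 : z ⬝ᵥ ((Bx * Bxᵀ + By * Byᵀ) *ᵥ z)
      = (Bxᵀ *ᵥ z) ⬝ᵥ (Bxᵀ *ᵥ z) + (Byᵀ *ᵥ z) ⬝ᵥ (Byᵀ *ᵥ z) := by
    rw [Matrix.add_mulVec, dotProduct_add, ← Matrix.mulVec_mulVec, ← Matrix.mulVec_mulVec,
      Matrix.dotProduct_mulVec, Matrix.dotProduct_mulVec z By, ← Matrix.mulVec_transpose,
      ← Matrix.mulVec_transpose]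
  rw [hz, dotProduct_zero] at h1
  have h2 : 0 ≤ (Bxᵀ *ᵥ z) ⬝ᵥ (Bxᵀ *ᵥ z) := Finset.sum_nonneg fun i _ => mul_self_nonneg _
  have h3 : 0 ≤ (Byᵀ *ᵥ z) ⬝ᵥ (Byᵀ *ᵥ z) := Finset.sum_nonneg fun i _ => mul_self_nonneg _
  have h4 : Bxᵀ *ᵥ z = 0 := dotProduct_self_eq_zero.1 (by linarith)
  have h5 : Rᵀ *ᵥ (Bxᵀ *ᵥ z) = z := by
    rw [Matrix.mulVec_mulVec, ← Matrix.transpose_mul, hR, Matrix.transpose_one, Matrix.one_mulVec]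
  rw [← h5, h4, Matrix.mulVec_zero]

lemma delta_unit (Bx By : Matrix I J ℝ) (R : Matrix J I ℝ) (hR : Bx * R = 1) :
    IsUnit (Bx * Bxᵀ + By * Byᵀ).det := by
  rw [← Matrix.isUnit_iff_isUnit_det, ← Matrix.mulVec_injective_iff_isUnit]
  intro a b hab
  have := delta_inj Bx By R hR (a - b) (by
    rw [Matrix.mulVec_sub]; exact sub_eq_zero.2 hab)
  exact sub_eq_zero.1 this

lemma schur_eq (Bx By : Matrix I J ℝ) (Δ : Matrix I I ℝ) (B : Matrix (Fin 2 × I) J ℝ)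
    (hB : B = Matrix.of fun p q => if p.1 = 0 then Bx p.2 q else By p.2 q) :
    Bᵀ * ((1 : Matrix (Fin 2) (Fin 2) ℝ) ⊗ₖ Δ)⁻¹ * B = Bxᵀ * Δ⁻¹ * Bx + Byᵀ * Δ⁻¹ * By := by
  rw [Matrix.inv_kronecker, inv_one, hB]
  ext i j
  simp [Matrix.mul_apply, Fintype.sum_prod_type, Fin.sum_univ_two, Matrix.one_apply]

/-- from a curl-free velocity to `A w = B Bᵀ w` -/
lemma curl_to_eig (Bx By : Matrix I J ℝ) (hC : Bx * Byᵀ = By * Bxᵀ) (u v : I → ℝ)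
    (h : Byᵀ *ᵥ u = Bxᵀ *ᵥ v) :
    (Bx * Bxᵀ + By * Byᵀ) *ᵥ u = Bx *ᵥ (Bxᵀ *ᵥ u + Byᵀ *ᵥ v) ∧
    (Bx * Bxᵀ + By * Byᵀ) *ᵥ v = By *ᵥ (Bxᵀ *ᵥ u + Byᵀ *ᵥ v) := by
  have e1 : Bx *ᵥ (Byᵀ *ᵥ v) = By *ᵥ (Bxᵀ *ᵥ v) := by
    rw [Matrix.mulVec_mulVec, hC, Matrix.mulVec_mulVec]
  have e2 : Bx *ᵥ (Byᵀ *ᵥ u) = By *ᵥ (Bxᵀ *ᵥ u) := by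
    rw [Matrix.mulVec_mulVec, hC, Matrix.mulVec_mulVec]
  constructor
  · rw [Matrix.add_mulVec, ← Matrix.mulVec_mulVec, ← Matrix.mulVec_mulVec, Matrix.mulVec_add, e1, h]
  · rw [Matrix.add_mulVec, ← Matrix.mulVec_mulVec, ← Matrix.mulVec_mulVec, Matrix.mulVec_add, ← e2,
      h]

lemma eig_to_curl (Bx By : Matrix I J ℝ) (hC : Bx * Byᵀ = By * Bxᵀ) (u v : I → ℝ)
    (h1 : (Bx * Bxᵀ + By * Byᵀ) *ᵥ u = Bx *ᵥ (Bxᵀ *ᵥ u + Byᵀ *ᵥ v))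
    (h2 : (Bx * Bxᵀ + By * Byᵀ) *ᵥ v = By *ᵥ (Bxᵀ *ᵥ u + Byᵀ *ᵥ v)) :
    Byᵀ *ᵥ u = Bxᵀ *ᵥ v := by
  have e1 : Bx *ᵥ (Byᵀ *ᵥ v) = By *ᵥ (Bxᵀ *ᵥ v) := by
    rw [Matrix.mulVec_mulVec, hC, Matrix.mulVec_mulVec]
  have e2 : Bx *ᵥ (Byᵀ *ᵥ u) = By *ᵥ (Bxᵀ *ᵥ u) := by
    rw [Matrix.mulVec_mulVec, hC, Matrix.mulVec_mulVec]
  rw [Matrix.add_mulVec, ← Matrix.mulVec_mulVec, ← Matrix.mulVec_mulVec, Matrix.mulVec_add, e1]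
    at h1
  rw [Matrix.add_mulVec, ← Matrix.mulVec_mulVec, ← Matrix.mulVec_mulVec, Matrix.mulVec_add, ← e2,
    add_comm] at h2
  have q1 : By *ᵥ (Byᵀ *ᵥ u - Bxᵀ *ᵥ v) = 0 := by
    rw [Matrix.mulVec_sub, add_left_cancel h1, sub_self]
  have q2 : Bx *ᵥ (Byᵀ *ᵥ u - Bxᵀ *ᵥ v) = 0 := by
    rw [Matrix.mulVec_sub, sub_eq_zero]
    rw [add_comm] at h2
    exact (add_right_cancel h2).symm
  set q := Byᵀ *ᵥ u - Bxᵀ *ᵥ v with hq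
  have : q ⬝ᵥ q = 0 := by
    conv_lhs => rw [hq]
    rw [← hq, sub_dotProduct, dotProduct_comm, dotProduct_comm _ q,
      Matrix.dotProduct_transpose_mulVec, Matrix.dotProduct_transpose_mulVec, q1, q2]
    simp
  exact sub_eq_zero.1 (dotProduct_self_eq_zero.1 this)

lemma ker_iff (Bx By : Matrix I J ℝ) (R : Matrix J I ℝ) (hR : Bx * R = 1)
    (hC : Bx * Byᵀ = By * Bxᵀ) (Δ : Matrix I I ℝ) (hΔ : Δ = Bx * Bxᵀ + By * Byᵀ) (p : J → ℝ) :
    (Bxᵀ * Δ⁻¹ * Bx + Byᵀ * Δ⁻¹ * By - 1) *ᵥ p = 0 ↔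
      ∃ u v, Byᵀ *ᵥ u = Bxᵀ *ᵥ v ∧ p = Bxᵀ *ᵥ u + Byᵀ *ᵥ v := by
  have hu : IsUnit Δ.det := hΔ ▸ delta_unit Bx By R hR
  have hS : (Bxᵀ * Δ⁻¹ * Bx + Byᵀ * Δ⁻¹ * By - 1) *ᵥ p
      = Bxᵀ *ᵥ (Δ⁻¹ *ᵥ (Bx *ᵥ p)) + Byᵀ *ᵥ (Δ⁻¹ *ᵥ (By *ᵥ p)) - p := by
    simp only [Matrix.sub_mulVec, Matrix.add_mulVec, Matrix.mulVec_mulVec, Matrix.one_mulVec,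
      Matrix.mul_assoc]
  rw [hS, sub_eq_zero]
  constructor
  · intro hp
    refine ⟨_, _, ?_, hp.symm⟩
    apply eig_to_curl Bx By hC
    · rw [hp, ← hΔ, Matrix.mulVec_mulVec, Matrix.mul_nonsing_inv _ hu, Matrix.one_mulVec]
    · rw [hp, ← hΔ, Matrix.mulVec_mulVec, Matrix.mul_nonsing_inv _ hu, Matrix.one_mulVec]
  · rintro ⟨u, v, h, rfl⟩
    obtain ⟨h1, h2⟩ := curl_to_eig Bx By hC u v h
    rw [← h1, ← h2, ← hΔ, Matrix.mulVec_mulVec u, Matrix.mulVec_mulVec v,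
      Matrix.nonsing_inv_mul _ hu, Matrix.one_mulVec, Matrix.one_mulVec]

end abstract_part

/-- for the 2D semi-staggered Stokes discretization, `1` is an eigenvalue
of the Schur complement `S = Bᵀ A⁻¹ B` with multiplicity exactly `(n−2)²`, i.e.
`dim ker(S − I) = (n−2)²`. -/
theorem stmt19 (n : ℕ) (hn : 3 ≤ n) (h : ℝ) (hh : h = 1 / n)
    (Bx By : Matrix (Fin (n - 1) × Fin (n - 1)) (Fin n × Fin n) ℝ)
    (hBx : Bx = (1 / (4 * h)) • (Gmat n ⊗ₖ Hmat n))
    (hBy : By = (1 / (4 * h)) • (Hmat n ⊗ₖ Gmat n))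
    (B : Matrix ((Fin 2) × (Fin (n - 1) × Fin (n - 1))) (Fin n × Fin n) ℝ)
    (hB : B = Matrix.of fun p q => if p.1 = 0 then Bx p.2 q else By p.2 q)
    (Δ : Matrix (Fin (n - 1) × Fin (n - 1)) (Fin (n - 1) × Fin (n - 1)) ℝ)
    (hΔ : Δ = Bx * Bxᵀ + By * Byᵀ)
    (A : Matrix ((Fin 2) × (Fin (n - 1) × Fin (n - 1)))
          ((Fin 2) × (Fin (n - 1) × Fin (n - 1))) ℝ)
    (hA : A = (1 : Matrix (Fin 2) (Fin 2) ℝ) ⊗ₖ Δ) :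
    Module.finrank ℝ
        (LinearMap.ker (Bᵀ * A⁻¹ * B - 1).mulVecLin) = (n - 2) ^ 2 := by
  have hc : (1 / (4 * h)) ≠ 0 := by
    have : (n : ℝ) ≠ 0 := by
      have : n ≠ 0 := by omega
      exact_mod_cast this
    rw [hh]; positivity
  set c := 1 / (4 * h) with hcdef
  clear_value c
  obtain ⟨RG, hRG⟩ := G_rinv n
  obtain ⟨RH, hRH⟩ := H_rinv n
  obtain ⟨SG, hSG⟩ := G_rinv (n - 1)
  obtain ⟨SH, hSH⟩ := H_rinv (n - 1)
  have hR : Bx * (c⁻¹ • (RG ⊗ₖ RH)) = 1 := by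
    rw [hBx, Matrix.smul_mul, Matrix.mul_smul, smul_smul, mul_inv_cancel₀ hc, one_smul,
      ← Matrix.mul_kronecker_mul, hRG, hRH, Matrix.one_kronecker_one]
  have hBxT : Bxᵀ = c • ((Gmat n)ᵀ ⊗ₖ (Hmat n)ᵀ) := by
    rw [hBx, Matrix.transpose_smul, Matrix.kroneckerMap_transpose]
  have hByT : Byᵀ = c • ((Hmat n)ᵀ ⊗ₖ (Gmat n)ᵀ) := by
    rw [hBy, Matrix.transpose_smul, Matrix.kroneckerMap_transpose]
  have hC : Bx * Byᵀ = By * Bxᵀ := by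
    rw [hBxT, hByT, hBx, hBy]
    simp only [Matrix.smul_mul, Matrix.mul_smul, ← Matrix.mul_kronecker_mul]
    rw [GH_skew]
    congr 2
    ext ⟨a, b⟩ ⟨a', b'⟩
    simp
  set P := (Gmat (n - 1))ᵀ ⊗ₖ (Hmat (n - 1))ᵀ with hP
  set Q := (Hmat (n - 1))ᵀ ⊗ₖ (Gmat (n - 1))ᵀ with hQ
  have hPQ : ∀ w, Byᵀ *ᵥ (P *ᵥ w) = Bxᵀ *ᵥ (Q *ᵥ w) := by
    intro w
    rw [Matrix.mulVec_mulVec, Matrix.mulVec_mulVec, hBxT, hByT, hP, hQ, Matrix.smul_mul,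
      Matrix.smul_mul, ← Matrix.mul_kronecker_mul, ← Matrix.mul_kronecker_mul,
      ← Matrix.transpose_mul, ← Matrix.transpose_mul, GH_comm]
  have hexact : ∀ u v, Byᵀ *ᵥ u = Bxᵀ *ᵥ v → ∃ w, u = P *ᵥ w ∧ v = Q *ᵥ w := by
    intro u v huv
    obtain ⟨U, rfl⟩ := Matrix.vec_bijective.surjective u
    obtain ⟨V, rfl⟩ := Matrix.vec_bijective.surjective v
    rw [hBxT, hByT, Matrix.smul_mulVec, Matrix.smul_mulVec, Matrix.kronecker_mulVec_vec,
      Matrix.kronecker_mulVec_vec] at huv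
    have huv' := Matrix.vec_inj.1 (smul_right_injective _ hc huv)
    rw [Matrix.transpose_transpose, Matrix.transpose_transpose] at huv'
    obtain ⟨W, h1, h2⟩ := curl_free n U V huv'
    refine ⟨W.vec, ?_, ?_⟩
    · rw [hP, Matrix.kronecker_mulVec_vec, Matrix.transpose_transpose, ← h1]
    · rw [hQ, Matrix.kronecker_mulVec_vec, Matrix.transpose_transpose, ← h2]
  have hPinj : ∀ w, P *ᵥ w = 0 → w = 0 := by
    intro w hw
    have : (SGᵀ ⊗ₖ SHᵀ) *ᵥ (P *ᵥ w) = w := by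
      rw [Matrix.mulVec_mulVec, hP, ← Matrix.mul_kronecker_mul, ← Matrix.transpose_mul,
        ← Matrix.transpose_mul, hSG, hSH, Matrix.transpose_one,
        Matrix.one_kronecker_one, Matrix.one_mulVec]
    rw [← this, hw, Matrix.mulVec_zero]
  have hΦ : ∀ w, (Bxᵀ * P + Byᵀ * Q).mulVecLin w = Bxᵀ *ᵥ (P *ᵥ w) + Byᵀ *ᵥ (Q *ᵥ w) := by
    intro w
    rw [Matrix.mulVecLin_apply, Matrix.add_mulVec, Matrix.mulVec_mulVec, Matrix.mulVec_mulVec]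
  have hinj : Function.Injective (Bxᵀ * P + Byᵀ * Q).mulVecLin := by
    rw [← LinearMap.ker_eq_bot, LinearMap.ker_eq_bot']
    intro w hw
    rw [hΦ] at hw
    have h1 := (curl_to_eig Bx By hC _ _ (hPQ w)).1
    rw [hw, Matrix.mulVec_zero] at h1
    exact hPinj w (delta_inj Bx By _ hR _ h1)
  have hker : LinearMap.ker (Bᵀ * A⁻¹ * B - 1).mulVecLin
      = LinearMap.range (Bxᵀ * P + Byᵀ * Q).mulVecLin := by
    ext p
    rw [LinearMap.mem_ker, Matrix.mulVecLin_apply, hA, schur_eq Bx By Δ B hB,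
      ker_iff Bx By _ hR hC Δ hΔ, LinearMap.mem_range]
    constructor
    · rintro ⟨u, v, huv, rfl⟩
      obtain ⟨w, rfl, rfl⟩ := hexact u v huv
      exact ⟨w, hΦ w⟩
    · rintro ⟨w, rfl⟩
      exact ⟨_, _, hPQ w, hΦ w⟩
  rw [hker, LinearMap.finrank_range_of_inj hinj, Module.finrank_fintype_fun_eq_card,
    Fintype.card_prod, Fintype.card_fin, Nat.sub_sub, sq]
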